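/- arXiv:1704.03702 — 2 statements merged into one kernel-verified Lean document; each statement's English description precedes it below -/
import Mathlib

section
/- Let K be an infinite field and 𝕏 ⊆ ℙ^n_K a 0-dimensional locally Gorenstein scheme which is a Cayley–Bacharach scheme. Then: (a) HF_{δ^σ_𝕏}(i) ≤ HF_𝕏(i − r_𝕏) for all i ∈ ℤ, and 𝕏 is arithmetically Gorenstein if and only if HF_{δ^σ_𝕏}(i) = HF_𝕏(i − r_𝕏) for all i ∈ ℤ; (b) 𝕏 is an almost Gorenstein scheme if and only if HF_{δ^σ_𝕏}(r_𝕏 + 1) = HF_𝕏(1). -/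
noncomputable section

/-! An algebraic model for a 0-dimensional subscheme `𝕏 ⊆ ℙⁿ_K` whose support avoids
the hyperplane `Z(X₀)`.  The scheme is recorded through the local rings
`𝒪_{𝕏,p_j}` at the points `p_1, …, p_s` of its support, together with the germ map
sending a homogeneous polynomial `F` of degree `i` to the tuple of germs
`(F_{p_1}, …, F_{p_s})`; this is the degree-`i` component of the injection
`ĩ : R → Q^h(R) ≅ ∏_j 𝒪_{𝕏,p_j}[T_j, T_j⁻¹]`, where every graded component of
`Q^h(R)` is identified with `Γ = ∏_j 𝒪_{𝕏,p_j}` by dropping the powers of the `T_j`.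
Since `x₀` has germ `1` at every point, the homogeneous coordinate ring
`R = P/I_𝕏` is faithfully encoded by the chain of subspaces
`R_i ≅ V_i = germ(P_i) ⊆ Γ` (with `V_i ⊆ V_{i+1}`, and `V_i = Γ` for `i ≫ 0`). -/

/-- The data of one (fat) point of a 0-dimensional scheme: a finite local `K`-algebra. -/
structure PointData (K : Type) [Field K] : Type 1 where
  carrier : Type
  [ring : CommRing carrier]
  [alg : Algebra K carrier]
  [loc : IsLocalRing carrier]
  [findim : FiniteDimensional K carrier]

attribute [instance] PointData.ring PointData.alg PointData.loc PointData.findim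

/-- A model of a 0-dimensional subscheme of `ℙⁿ_K`, no point of whose support lies
on `Z(X₀)` (coordinates being chosen so that each point has `X₀`-coordinate 1, the
germ of `x₀` at every point is `1`). -/
structure ZeroDimScheme (K : Type) [Field K] (n : ℕ) : Type 1 where
  /-- the number of points in the support -/
  s : ℕ
  spos : 0 < s
  /-- the local rings `𝒪_{𝕏,p_j}` -/
  pt : Fin s → PointData K
  /-- the germ map: for `F` homogeneous of degree `i` this is the degree-`i`
  component of `ĩ : R → Q^h(R)`, i.e. `F ↦ (F_{p_1}, …, F_{p_s})` -/
  germ : MvPolynomial (Fin (n + 1)) K →ₐ[K] ∀ j, (pt j).carrier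
  /-- the germ of `X₀` at each point is `1` -/
  germ_X0 : germ (MvPolynomial.X 0) = 1
  /-- in all large degrees, the germ map is surjective onto `∏_j 𝒪_{𝕏,p_j}`
  (this characterizes `I_𝕏` as the full homogeneous vanishing ideal of the scheme) -/
  eventually_surj : ∃ N : ℕ, ∀ i, N ≤ i →
    Submodule.map germ.toLinearMap
      (MvPolynomial.homogeneousSubmodule (Fin (n + 1)) K i) = ⊤

namespace ZeroDimScheme

variable {K : Type} [Field K] {n : ℕ}

/-- `Γ = ∏_j 𝒪_{𝕏,p_j}`, the common model for every graded component of `Q^h(R)`. -/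
abbrev Gamma (S : ZeroDimScheme K n) : Type := ∀ j, (S.pt j).carrier

variable (S : ZeroDimScheme K n)

/-- `V i ⊆ Γ` is the image of the degree-`i` component `R_i` of the homogeneous
coordinate ring `R` under (the degree-`i` component of) `ĩ`; we identify `R_i ≅ V i`. -/
def V (i : ℕ) : Submodule K S.Gamma :=
  Submodule.map S.germ.toLinearMap
    (MvPolynomial.homogeneousSubmodule (Fin (n + 1)) K i)

/-- `R_i` for `i : ℤ` (zero in negative degrees). -/
def Vz (i : ℤ) : Submodule K S.Gamma := if 0 ≤ i then S.V i.toNat else ⊥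

/-- `deg 𝕏 = Σ_j dim_K 𝒪_{𝕏,p_j}`. -/
def degX : ℕ := Module.finrank K S.Gamma

/-- The Hilbert function `HF_𝕏(i) = dim_K R_i`. -/
def HF (i : ℕ) : ℕ := Module.finrank K (S.V i)

/-- The Hilbert function on `ℤ`. -/
def HFz (i : ℤ) : ℕ := Module.finrank K (S.Vz i)

/-- The regularity index `r_𝕏`: the least `r` with `HF_𝕏(i) = deg 𝕏` for all `i ≥ r`. -/
def rX : ℕ := sInf {r : ℕ | ∀ i, r ≤ i → S.HF i = S.degX}

/-- `κ_j = dim_K κ(p_j)`, the residue field of `𝕏` at `p_j`. -/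
def kappa (j : Fin S.s) : ℕ :=
  Module.finrank K
    ((S.pt j).carrier ⧸
      Submodule.restrictScalars K (IsLocalRing.maximalIdeal (S.pt j).carrier))

/-- `sj` is a socle element of `𝒪_{𝕏,p_j}`, i.e. `sj ∈ Ann(𝔪_{𝕏,p_j})`.  By
Proposition 1.2, the maximal `p_j`-subschemes `𝕐 ⊆ 𝕏` correspond 1-1 to the ideals
of `Γ` generated by `(0,…,0,sj,0,…,0)` with `sj` a *nonzero* socle element. -/
def IsSocle (j : Fin S.s) (sj : (S.pt j).carrier) : Prop :=
  ∀ b ∈ IsLocalRing.maximalIdeal (S.pt j).carrier, sj * b = 0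

/-- The ideal `U = ⟨(0,…,0,sj,0,…,0)⟩` of `Γ` corresponding to the maximal
`p_j`-subscheme `𝕐` determined by the socle element `sj`; one has `I_{𝕐/𝕏} = ĩ⁻¹(U)`. -/
def sepIdeal (j : Fin S.s) (sj : (S.pt j).carrier) : Submodule K S.Gamma :=
  Submodule.restrictScalars K (Ideal.span {(Pi.single j sj : S.Gamma)})

/-- The degree-`i` component `(I_{𝕐/𝕏})_i = R_i ∩ ĩ⁻¹(U)` of the ideal of the maximal
`p_j`-subscheme `𝕐` (given by the socle element `sj`) in `R`. -/
def IY (j : Fin S.s) (sj : (S.pt j).carrier) (i : ℕ) : Submodule K S.Gamma :=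
  S.V i ⊓ S.sepIdeal j sj

/-- `(I_{𝕐/𝕏})_i` for `i : ℤ`. -/
def IYz (j : Fin S.s) (sj : (S.pt j).carrier) (i : ℤ) : Submodule K S.Gamma :=
  S.Vz i ⊓ S.sepIdeal j sj

/-- The Hilbert function `HF_𝕐(i) = HF_𝕏(i) - dim_K (I_{𝕐/𝕏})_i` of the maximal
`p_j`-subscheme `𝕐` given by the socle element `sj`. -/
def HFY (j : Fin S.s) (sj : (S.pt j).carrier) (i : ℕ) : ℕ :=
  S.HF i - Module.finrank K (S.IY j sj i)

/-- `HF_𝕐` on `ℤ`. -/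
def HFYz (j : Fin S.s) (sj : (S.pt j).carrier) (i : ℤ) : ℕ :=
  S.HFz i - Module.finrank K (S.IYz j sj i)

/-- `α_{𝕐/𝕏} = min {i | (I_{𝕐/𝕏})_i ≠ 0}`. -/
def alphaY (j : Fin S.s) (sj : (S.pt j).carrier) : ℕ :=
  sInf {i : ℕ | S.IY j sj i ≠ ⊥}

/-- `μ(a) = min {i | (0,…,0,a T_j^i,0,…,0) ∈ ĩ(R)}` for `a ∈ 𝒪_{𝕏,p_j}`. -/
def mu (j : Fin S.s) (a : (S.pt j).carrier) : ℕ :=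
  sInf {i : ℕ | (Pi.single j a : S.Gamma) ∈ S.V i}

/-- `μ_{𝕐/𝕏}`, the maximal degree of a minimal separator of the maximal
`p_j`-subscheme `𝕐` given by the socle element `sj`; independently of all choices it
equals `max {μ(a·sj) | a ∈ 𝒪_{𝕏,p_j}, a·sj ≠ 0}`. -/
def muY (j : Fin S.s) (sj : (S.pt j).carrier) : ℕ :=
  sSup {m : ℕ | ∃ a : (S.pt j).carrier, a * sj ≠ 0 ∧ m = S.mu j (a * sj)}

/-- `deg_𝕏(p_j) = min {μ_{𝕐/𝕏} | 𝕐 a maximal p_j-subscheme of 𝕏}`. -/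
def degP (j : Fin S.s) : ℕ :=
  sInf {m : ℕ | ∃ sj : (S.pt j).carrier, S.IsSocle j sj ∧ sj ≠ 0 ∧ m = S.muY j sj}

/-- `𝕏` has the Cayley–Bacharach property of degree `d`: `deg_𝕏(p_j) ≥ d + 1` for all `j`. -/
def CBP (d : ℕ) : Prop := ∀ j : Fin S.s, d + 1 ≤ S.degP j

/-- `𝕏` is a Cayley–Bacharach scheme: it has `CBP(r_𝕏 - 1)`. -/
def CayleyBacharach : Prop := S.CBP (S.rX - 1)

/-- The residue class map `𝒪_{𝕏,p_j} → κ(p_j)` as a `K`-linear map. -/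
def resQ (j : Fin S.s) :
    (S.pt j).carrier →ₗ[K]
      ((S.pt j).carrier ⧸
        Submodule.restrictScalars K (IsLocalRing.maximalIdeal (S.pt j).carrier)) :=
  (Submodule.restrictScalars K (IsLocalRing.maximalIdeal (S.pt j).carrier)).mkQ

/-- The residue classes of `e 0, …, e (κ_j - 1)` form a `K`-basis of `κ(p_j)`. -/
def IsResidueBasis (j : Fin S.s) {m : ℕ} (e : Fin m → (S.pt j).carrier) : Prop :=
  LinearIndependent K (fun k => S.resQ j (e k)) ∧
    Submodule.span K (Set.range fun k => S.resQ j (e k)) = ⊤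

/-- A family `τ_j : 𝒪_{𝕏,p_j} → K` of trace maps: each `τ_j` is a generator of
`Hom_K(𝒪_{𝕏,p_j}, K)` as an `𝒪_{𝕏,p_j}`-module.  Such a family exists iff `𝕏` is
locally Gorenstein, and it induces a homogeneous trace map `σ` of degree zero of
`Q^h(R)/L₀` (componentwise). -/
def IsTraceFamily (τ : ∀ j, (S.pt j).carrier →ₗ[K] K) : Prop :=
  ∀ j, Function.Bijective
    (fun a : (S.pt j).carrier => (τ j).comp (LinearMap.mulRight K a))

/-- The total trace `Γ → K`, `y ↦ Σ_j τ_j (y_j)`; on the degree-`i` component of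
`Q^h(R)` the trace map `σ` is `q ↦ (Ttot τ q)·x₀^i`. -/
def Ttot (τ : ∀ j, (S.pt j).carrier →ₗ[K] K) : S.Gamma →ₗ[K] K :=
  ∑ j : Fin S.s, (τ j).comp (LinearMap.proj j)

/-- The degree-`k` component `(𝔠^σ_𝕏)_k ⊆ Q^h(R)_k ≅ Γ` of the Dedekind complementary
module: `g ∈ (𝔠^σ_𝕏)_k` iff `σ(g · R) ⊆ K[x₀]`, i.e. `Ttot τ (g·x) = 0` whenever
`x ∈ R_i` with `k + i < 0`. -/
def Cmod (τ : ∀ j, (S.pt j).carrier →ₗ[K] K) (k : ℤ) : Submodule K S.Gamma :=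
  ⨅ (i : ℕ) (_ : k + (i : ℤ) < 0) (x : S.Gamma) (_ : x ∈ S.V i),
    LinearMap.ker ((S.Ttot τ).comp (LinearMap.mulRight K x))

/-- The degree-`i` component `(δ^σ_𝕏)_i ⊆ Q^h(R)_i ≅ Γ` of the Dedekind different
`δ^σ_𝕏 = {f ∈ Q^h(R) | f · 𝔠^σ_𝕏 ⊆ R}`. -/
def delta (τ : ∀ j, (S.pt j).carrier →ₗ[K] K) (i : ℤ) : Submodule K S.Gamma :=
  ⨅ (k : ℤ) (g : S.Gamma) (_ : g ∈ S.Cmod τ k),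
    Submodule.comap (LinearMap.mulRight K g) (S.Vz (i + k))

/-- The Hilbert function of the Dedekind different. -/
def HFdelta (τ : ∀ j, (S.pt j).carrier →ₗ[K] K) (i : ℤ) : ℕ :=
  Module.finrank K (S.delta τ i)

/-- `𝕏` has minimal Dedekind different: `δ^σ_𝕏 = ⊕_{i ≥ 2 r_𝕏} R_i`
(recall `R_i ≅ Γ` for `i ≥ r_𝕏`). -/
def MinimalDedekind (τ : ∀ j, (S.pt j).carrier →ₗ[K] K) : Prop :=
  ∀ i : ℤ, S.delta τ i = if 2 * (S.rX : ℤ) ≤ i then ⊤ else ⊥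

/-- The degree-`i` component (`i ≥ 0`) of the conductor
`𝔉_{R̃/R} = {f ∈ R̃ | f·R̃ ⊆ R}` of `R` in `R̃ = ∏_j 𝒪_{𝕏,p_j}[T_j]`
(whose degree-`i` component is all of `Γ` for every `i ≥ 0`). -/
def cond (i : ℕ) : Submodule K S.Gamma :=
  ⨅ y : S.Gamma, Submodule.comap (LinearMap.mulRight K y) (S.V i)

/-- The conductor on `ℤ` (zero in negative degrees, where `R̃` vanishes). -/
def condZ (i : ℤ) : Submodule K S.Gamma := if 0 ≤ i then S.cond i.toNat else ⊥

/-- The degree-`i` component of the trace `tr(𝔠^σ_𝕏) = δ^σ_𝕏 · 𝔠^σ_𝕏` of the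
Dedekind complementary module. -/
def trC (τ : ∀ j, (S.pt j).carrier →ₗ[K] K) (i : ℤ) : Submodule K S.Gamma :=
  ⨆ (a : ℤ) (b : ℤ) (_ : a + b = i), S.delta τ a * S.Cmod τ b

/-- `𝕏` is nearly Gorenstein: `𝔪 ⊆ tr(𝔠^σ_𝕏)`. -/
def NearlyGorenstein (τ : ∀ j, (S.pt j).carrier →ₗ[K] K) : Prop :=
  ∀ i : ℤ, 1 ≤ i → S.Vz i ≤ S.trC τ i

/-- `𝕏` is almost Gorenstein: there is an exact sequence of graded `R`-modules
`0 → R → 𝔠^σ_𝕏(-r_𝕏) → C → 0` with `𝔪·C = 0`.  A degree-zero graded injection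
`R → 𝔠^σ_𝕏(-r_𝕏)` is multiplication by an element `g ∈ (𝔠^σ_𝕏)_{-r_𝕏}` with
`Ann_R(g) = 0`, and `𝔪·C = 0` means `𝔪 · 𝔠^σ_𝕏(-r_𝕏) ⊆ g·R`. -/
def AlmostGorenstein (τ : ∀ j, (S.pt j).carrier →ₗ[K] K) : Prop :=
  ∃ g ∈ S.Cmod τ (-(S.rX : ℤ)),
    (∀ i : ℕ, ∀ x ∈ S.V i, x * g = 0 → x = 0) ∧
    (∀ a : ℕ, 1 ≤ a → ∀ x ∈ S.V a, ∀ k : ℤ, ∀ h ∈ S.Cmod τ k,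
      x * h ∈ Submodule.map (LinearMap.mulRight K g) (S.Vz ((a : ℤ) + k + (S.rX : ℤ))))

/-- `𝕏` is arithmetically Gorenstein, i.e. `R` is a Gorenstein ring; equivalently the
canonical module is free of rank one: `𝔠^σ_𝕏 = g·R` for some `g ∈ (𝔠^σ_𝕏)_{-r_𝕏}`. -/
def ArithGorenstein (τ : ∀ j, (S.pt j).carrier →ₗ[K] K) : Prop :=
  ∃ g ∈ S.Cmod τ (-(S.rX : ℤ)),
    ∀ k : ℤ, S.Cmod τ k = Submodule.map (LinearMap.mulRight K g) (S.Vz (k + (S.rX : ℤ)))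

/-- `𝕏` is level: the socle of `R̄ = R/⟨x₀⟩` equals `R̄_{r_𝕏}`, i.e. no nonzero
homogeneous element of `R̄` of degree `< r_𝕏` is annihilated by `𝔪̄` (recall
`R̄_i ≅ V i / V (i-1)` and `x₀`-multiplication preserves germs). -/
def Level : Prop :=
  ∀ i : ℕ, i < S.rX → ∀ x ∈ S.V i,
    (∀ a : ℕ, 1 ≤ a → ∀ y ∈ S.V a, x * y ∈ S.Vz ((i : ℤ) + (a : ℤ) - 1)) →
      x ∈ S.Vz ((i : ℤ) - 1)

/-- The subspace `{x ∈ Γ | x_k = 0 for k ≠ j}` of `Γ`: the degreewise model for the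
ideal of the subscheme `𝕐_j ⊆ 𝕏` with `I_{𝕐_j} = ∩_{k ≠ j} I_k`. -/
def Wj (j : Fin S.s) : Submodule K S.Gamma :=
  ⨅ (k : Fin S.s) (_ : k ≠ j),
    LinearMap.ker (LinearMap.proj k : S.Gamma →ₗ[K] (S.pt k).carrier)

/-- `(I_{𝕐_j/𝕏})_i` for the subscheme `𝕐_j` complementary to `p_j`. -/
def IW (j : Fin S.s) (i : ℕ) : Submodule K S.Gamma := S.V i ⊓ S.Wj j

/-- The Hilbert function of the subscheme `𝕐_j` complementary to `p_j`. -/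
def HFW (j : Fin S.s) (i : ℕ) : ℕ := S.HF i - Module.finrank K (S.IW j i)

/-- `α_{𝕐_j/𝕏}` for the subscheme `𝕐_j` complementary to `p_j`. -/
def alphaW (j : Fin S.s) : ℕ := sInf {i : ℕ | S.IW j i ≠ ⊥}

/-- The subspace `{x ∈ Γ | x_k = 0 for k ∉ {j₁, j₂}}` of `Γ`: the degreewise model for
the ideal in `R` of the subscheme of the reduced scheme `𝕏` complementary to `{p_{j₁}, p_{j₂}}`. -/
def Wpair (j1 j2 : Fin S.s) : Submodule K S.Gamma :=
  ⨅ (k : Fin S.s) (_ : k ≠ j1) (_ : k ≠ j2),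
    LinearMap.ker (LinearMap.proj k : S.Gamma →ₗ[K] (S.pt k).carrier)

/-- The homogeneous vanishing ideal `I_𝕏 ⊆ P`. -/
def IX : Ideal (MvPolynomial (Fin (n + 1)) K) :=
  Ideal.span {F | (∃ i : ℕ, F ∈ MvPolynomial.homogeneousSubmodule (Fin (n + 1)) K i) ∧
    S.germ F = 0}

/-- The `n×n`-minor (Jacobian determinant with respect to `X_1, …, X_n`) of an
`n`-tuple of polynomials. -/
def jacMinor (Fs : Fin n → MvPolynomial (Fin (n + 1)) K) : MvPolynomial (Fin (n + 1)) K :=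
  Matrix.det (Matrix.of fun a b : Fin n => MvPolynomial.pderiv (Fin.succ b) (Fs a))

/-- The preimage in `P` of the Kähler different `ϑ_𝕏 ⊆ R`: the ideal generated by
`I_𝕏` together with all `n×n` minors of the Jacobian matrix of elements of `I_𝕏`. -/
def KaehlerIdeal : Ideal (MvPolynomial (Fin (n + 1)) K) :=
  S.IX ⊔ Ideal.span {m | ∃ Fs : Fin n → MvPolynomial (Fin (n + 1)) K,
    (∀ a, Fs a ∈ S.IX) ∧ m = jacMinor Fs}

/-- The degree-`i` component of the Kähler different `ϑ_𝕏 ⊆ R`, viewed inside `Γ`. -/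
def thetaPiece (i : ℕ) : Submodule K S.Gamma :=
  Submodule.map S.germ.toLinearMap
    (Submodule.restrictScalars K S.KaehlerIdeal ⊓
      MvPolynomial.homogeneousSubmodule (Fin (n + 1)) K i)

end ZeroDimScheme

end
namespace ZeroDimScheme

section Helpers

variable {K : Type} [Field K] {n : ℕ} (S : ZeroDimScheme K n)
  (τ : ∀ j, (S.pt j).carrier →ₗ[K] K)

theorem V_eq_pow (a : ℕ) : S.V a = (S.V 1) ^ a := by
  unfold V
  rw [← MvPolynomial.homogeneousSubmodule_one_pow (σ := Fin (n + 1)) (R := K) (n := a)]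
  exact Submodule.map_pow _ _ _

theorem one_mem_V_one : (1 : S.Gamma) ∈ S.V 1 :=
  ⟨MvPolynomial.X 0, MvPolynomial.isHomogeneous_X K 0, S.germ_X0⟩

theorem one_mem_V_zero : (1 : S.Gamma) ∈ S.V 0 :=
  ⟨1, MvPolynomial.isHomogeneous_one _ _, map_one S.germ⟩

theorem V_mul {a b : ℕ} {x y : S.Gamma} (hx : x ∈ S.V a) (hy : y ∈ S.V b) :
    x * y ∈ S.V (a + b) := by
  rw [V_eq_pow, pow_add, ← V_eq_pow, ← V_eq_pow]
  exact Submodule.mul_mem_mul hx hy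

theorem V_mono {a b : ℕ} (h : a ≤ b) : S.V a ≤ S.V b := by
  induction b, h using Nat.le_induction with
  | base => exact le_rfl
  | succ b _ ih =>
    intro x hx
    simpa using S.V_mul (ih hx) S.one_mem_V_one

theorem Vz_nat (a : ℕ) : S.Vz (a : ℤ) = S.V a := by
  simp [Vz]

theorem Vz_mul {a b : ℤ} {x y : S.Gamma} (hx : x ∈ S.Vz a) (hy : y ∈ S.Vz b) :
    x * y ∈ S.Vz (a + b) := by
  by_cases ha : 0 ≤ a
  · by_cases hb : 0 ≤ b
    · lift a to ℕ using ha
      lift b to ℕ using hb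
      rw [Vz_nat] at hx hy
      rw [← Nat.cast_add, Vz_nat]
      exact S.V_mul hx hy
    · have : y = 0 := by simpa [Vz, hb] using hy
      simp [this]
  · have : x = 0 := by simpa [Vz, ha] using hx
    simp [this]

theorem mem_Cmod {k : ℤ} {g : S.Gamma} :
    g ∈ S.Cmod τ k ↔ ∀ i : ℕ, k + (i : ℤ) < 0 → ∀ x ∈ S.V i, S.Ttot τ (g * x) = 0 := by
  simp [Cmod, Submodule.mem_iInf]

theorem mem_delta {i : ℤ} {f : S.Gamma} :
    f ∈ S.delta τ i ↔ ∀ k : ℤ, ∀ g ∈ S.Cmod τ k, f * g ∈ S.Vz (i + k) := by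
  simp [delta, Submodule.mem_iInf]

theorem V_mul_Cmod {a : ℤ} {k : ℤ} {x g : S.Gamma} (hx : x ∈ S.Vz a) (hg : g ∈ S.Cmod τ k) :
    x * g ∈ S.Cmod τ (a + k) := by
  by_cases ha : 0 ≤ a
  · lift a to ℕ using ha
    rw [Vz_nat] at hx
    rw [mem_Cmod] at hg ⊢
    intro i hi y hy
    have := hg (a + i) (by push_cast; omega) (x * y) (S.V_mul hx hy)
    rw [← this]; congr 1; ring
  · have : x = 0 := by simpa [Vz, ha] using hx
    simp [this]

theorem Cmod_zero : S.Cmod τ 0 = ⊤ := by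
  rw [eq_top_iff]
  intro g _
  rw [mem_Cmod]
  intro i hi
  omega

theorem exists_comp (hτ : S.IsTraceFamily τ) (hCB : S.CayleyBacharach) (j : Fin S.s) :
    ∃ g ∈ S.Cmod τ (-(S.rX : ℤ)), IsUnit (g j) := by
  classical
  have h1 := hCB j
  set d := S.rX - 1 with hd
  have hne : {m : ℕ | ∃ sj : (S.pt j).carrier, S.IsSocle j sj ∧ sj ≠ 0 ∧
      m = S.muY j sj}.Nonempty := by
    by_contra hcon
    rw [Set.not_nonempty_iff_eq_empty] at hcon
    unfold degP at h1
    rw [hcon, Nat.sInf_empty] at h1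
    omega
  obtain ⟨m, sj, hs, hs0, hm⟩ := hne
  have h2 : d + 1 ≤ S.muY j sj := h1.trans (Nat.sInf_le ⟨sj, hs, hs0, rfl⟩)
  have h3 : ∃ a : (S.pt j).carrier, d + 1 ≤ S.mu j (a * sj) := by
    by_contra! hcon
    have : S.muY j sj ≤ d := by
      apply csSup_le'
      rintro m ⟨a, _, rfl⟩
      have := hcon a
      omega
    omega
  obtain ⟨a, ha⟩ := h3
  have h4 : (Pi.single j (a * sj) : S.Gamma) ∉ S.V d := by
    intro hmem
    have : S.mu j (a * sj) ≤ d := Nat.sInf_le hmem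
    omega
  obtain ⟨φ, hφ, hker⟩ := Submodule.exists_le_ker_of_notMem h4
  have h5 : ∀ j, ∃ b : (S.pt j).carrier, (τ j).comp (LinearMap.mulRight K b) =
      φ.comp (LinearMap.single K (fun j => (S.pt j).carrier) j) :=
    fun j => (hτ j).2 _
  choose g hg using h5
  have h6 : ∀ x : S.Gamma, S.Ttot τ (g * x) = φ x := by
    intro x
    have e : ∀ j, τ j (g j * x j) = φ (Pi.single j (x j)) := by
      intro j
      have := LinearMap.congr_fun (hg j) (x j)
      simpa [mul_comm] using this
    conv_rhs => rw [← Finset.univ_sum_single x]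
    simp [Ttot, e]
  refine ⟨g, ?_, ?_⟩
  · rw [mem_Cmod]
    intro i hi x hx
    rw [h6]
    exact hker (S.V_mono (by omega) hx)
  · by_contra hu
    apply hφ
    have hgm : g j ∈ IsLocalRing.maximalIdeal (S.pt j).carrier :=
      (IsLocalRing.mem_maximalIdeal _).2 hu
    have h7 := LinearMap.congr_fun (hg j) (a * sj)
    have h8 : a * sj * g j = 0 := by rw [mul_assoc, hs _ hgm, mul_zero]
    simpa [h8] using h7.symm

theorem exists_unit [Infinite K] (hτ : S.IsTraceFamily τ) (hCB : S.CayleyBacharach) :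
    ∃ g ∈ S.Cmod τ (-(S.rX : ℤ)), ∃ u : S.Gamma, g * u = 1 := by
  let C := S.Cmod τ (-(S.rX : ℤ))
  let p : Fin S.s → Submodule K C := fun j =>
    Submodule.comap ((LinearMap.proj j : S.Gamma →ₗ[K] (S.pt j).carrier).comp C.subtype)
      (Submodule.restrictScalars K (IsLocalRing.maximalIdeal (S.pt j).carrier))
  have hp : ⋃ j, (p j : Set C) ≠ Set.univ := by
    intro h
    obtain ⟨j, hj⟩ := Subspace.exists_eq_top_of_iUnion_eq_univ h
    obtain ⟨g, hg, hu⟩ := S.exists_comp τ hτ hCB j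
    have : (⟨g, hg⟩ : C) ∈ p j := by rw [hj]; trivial
    have h2 : g j ∈ IsLocalRing.maximalIdeal (S.pt j).carrier := this
    exact (IsLocalRing.mem_maximalIdeal _).1 h2 hu
  obtain ⟨⟨g, hg⟩, hgp⟩ := (Set.ne_univ_iff_exists_notMem _).1 hp
  have hu : ∀ j, IsUnit (g j) := by
    intro j
    by_contra hu
    apply hgp
    rw [Set.mem_iUnion]
    exact ⟨j, (IsLocalRing.mem_maximalIdeal _).2 hu⟩
  obtain ⟨u, hu⟩ := (Pi.isUnit_iff.2 hu).exists_right_inv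
  exact ⟨g, hg, u, hu⟩

theorem finrank_map_mul {g u : S.Gamma} (h : g * u = 1) (W : Submodule K S.Gamma) :
    Module.finrank K (Submodule.map (LinearMap.mulRight K g) W) = Module.finrank K W := by
  have hinj : Function.Injective (LinearMap.mulRight K g) := by
    intro x y hxy
    have hxy' : x * g = y * g := hxy
    calc x = x * g * u := by rw [mul_assoc, h, mul_one]
      _ = y * g * u := by rw [hxy']
      _ = y := by rw [mul_assoc, h, mul_one]
  exact (Submodule.equivMapOfInjective _ hinj W).finrank_eq.symm

theorem map_delta_le {g : S.Gamma} (hg : g ∈ S.Cmod τ (-(S.rX : ℤ))) (i : ℤ) :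
    Submodule.map (LinearMap.mulRight K g) (S.delta τ i) ≤ S.Vz (i - (S.rX : ℤ)) := by
  rintro _ ⟨f, hf, rfl⟩
  exact (S.mem_delta τ).1 hf _ g hg

/-- If the Hilbert functions agree in degree `i`, then `u * V_{i-r}` lies in the different. -/
theorem mem_delta_of_eq {g u : S.Gamma} (hg : g ∈ S.Cmod τ (-(S.rX : ℤ))) (h : g * u = 1)
    {i : ℤ} (hi : S.HFdelta τ i = S.HFz (i - (S.rX : ℤ))) {x : S.Gamma}
    (hx : x ∈ S.Vz (i - (S.rX : ℤ))) : x * u ∈ S.delta τ i := by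
  have heq := Submodule.eq_of_le_of_finrank_eq (S.map_delta_le τ hg i)
    ((S.finrank_map_mul h _).trans hi)
  rw [← heq] at hx
  obtain ⟨f, hf, rfl⟩ := hx
  have : LinearMap.mulRight K g f * u = f := by
    simp [mul_assoc, h]
  rwa [this]

theorem HFdelta_le {g u : S.Gamma} (hg : g ∈ S.Cmod τ (-(S.rX : ℤ))) (h : g * u = 1)
    (i : ℤ) : S.HFdelta τ i ≤ S.HFz (i - (S.rX : ℤ)) := by
  rw [HFdelta, ← S.finrank_map_mul h]
  exact Submodule.finrank_mono (S.map_delta_le τ hg i)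

theorem le_HFdelta {g u : S.Gamma} (h : g * u = 1) {i : ℤ}
    (H : ∀ x ∈ S.Vz (i - (S.rX : ℤ)), x * u ∈ S.delta τ i) :
    S.HFz (i - (S.rX : ℤ)) ≤ S.HFdelta τ i := by
  rw [HFz, ← S.finrank_map_mul ((mul_comm u g).trans h)]
  apply Submodule.finrank_mono
  rintro _ ⟨x, hx, rfl⟩
  exact H x hx

end Helpers

end ZeroDimScheme

/-- Proposition 6.10 / `propSec5.8`.  Let `K` be an infinite field
and `𝕏 ⊆ ℙⁿ_K` a 0-dimensional locally Gorenstein Cayley–Bacharach scheme.  Then: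
(a) `HF_{δ^σ_𝕏}(i) ≤ HF_𝕏(i - r_𝕏)` for all `i ∈ ℤ`, and `𝕏` is arithmetically
Gorenstein iff `HF_{δ^σ_𝕏}(i) = HF_𝕏(i - r_𝕏)` for all `i ∈ ℤ`;
(b) `𝕏` is an almost Gorenstein scheme iff `HF_{δ^σ_𝕏}(r_𝕏 + 1) = HF_𝕏(1)`. -/
theorem dedekind_CB_stmt17 (K : Type) [Field K] [Infinite K] (n : ℕ)
    (S : ZeroDimScheme K n)
    (τ : ∀ j, (S.pt j).carrier →ₗ[K] K) (hτ : S.IsTraceFamily τ)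
    (hCB : S.CayleyBacharach) :
    ((∀ i : ℤ, S.HFdelta τ i ≤ S.HFz (i - (S.rX : ℤ))) ∧
      (S.ArithGorenstein τ ↔ ∀ i : ℤ, S.HFdelta τ i = S.HFz (i - (S.rX : ℤ)))) ∧
    (S.AlmostGorenstein τ ↔ S.HFdelta τ ((S.rX : ℤ) + 1) = S.HF 1) := by
  obtain ⟨g, hg, u, hgu⟩ := S.exists_unit τ hτ hCB
  refine ⟨⟨S.HFdelta_le τ hg hgu, ?_, ?_⟩, ?_, ?_⟩
  · rintro ⟨q, hq, hC⟩ i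
    have h1 : (1 : S.Gamma) ∈ S.Cmod τ 0 := by rw [S.Cmod_zero]; trivial
    rw [hC] at h1
    obtain ⟨v, hv, hvq⟩ := h1
    have hqv : q * v = 1 := by rw [mul_comm]; exact hvq
    refine le_antisymm (S.HFdelta_le τ hq hqv i) (S.le_HFdelta τ hqv ?_)
    intro x hx
    rw [S.mem_delta]
    intro k y hy
    rw [hC] at hy
    obtain ⟨w, hw, rfl⟩ := hy
    have e : x * v * LinearMap.mulRight K q w = x * w := by
      rw [LinearMap.mulRight_apply]
      calc x * v * (w * q) = x * w * (q * v) := by ring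
        _ = x * w := by rw [hqv, mul_one]
    rw [e]
    have := S.Vz_mul hx hw
    convert this using 2
    ring
  · intro H
    have hu : u ∈ S.delta τ (S.rX : ℤ) := by
      have h1 : (1 : S.Gamma) ∈ S.Vz ((S.rX : ℤ) - (S.rX : ℤ)) := by
        rw [sub_self]
        have := S.one_mem_V_zero
        rwa [← S.Vz_nat] at this
      simpa using S.mem_delta_of_eq τ hg hgu (H _) h1
    refine ⟨g, hg, fun k => le_antisymm ?_ ?_⟩
    · intro y hy
      refine ⟨u * y, ?_, ?_⟩
      · rw [add_comm]
        exact (S.mem_delta τ).1 hu k y hy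
      · rw [LinearMap.mulRight_apply]
        calc u * y * g = y * (g * u) := by ring
          _ = y := by rw [hgu, mul_one]
    · rintro _ ⟨w, hw, rfl⟩
      have := S.V_mul_Cmod τ hw hg
      rwa [add_neg_cancel_right] at this
  · rintro ⟨q, hq, hinj, hm⟩
    obtain ⟨N, hN⟩ := S.eventually_surj
    have hT : S.V N = ⊤ := hN N le_rfl
    have hi : Function.Injective (LinearMap.mulRight K q) := by
      rw [← LinearMap.ker_eq_bot, LinearMap.ker_eq_bot']
      intro x hx
      exact hinj N x (by rw [hT]; trivial) hx
    obtain ⟨v, hv⟩ := LinearMap.injective_iff_surjective.1 hi 1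
    have hqv : q * v = 1 := by rw [mul_comm]; exact hv
    have e1 : S.HFz (((S.rX : ℤ) + 1) - (S.rX : ℤ)) = S.HF 1 := by
      rw [add_sub_cancel_left]
      unfold ZeroDimScheme.HFz ZeroDimScheme.HF
      rw [← S.Vz_nat 1]; rfl
    rw [← e1]
    refine le_antisymm (S.HFdelta_le τ hq hqv _) (S.le_HFdelta τ hqv ?_)
    intro x hx
    rw [add_sub_cancel_left, ← Nat.cast_one, S.Vz_nat] at hx
    rw [S.mem_delta]
    intro k y hy
    obtain ⟨w, hw, hwq⟩ := hm 1 le_rfl x hx k y hy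
    rw [LinearMap.mulRight_apply] at hwq
    have e : x * v * y = w := by
      calc x * v * y = (x * y) * v := by ring
        _ = w * (q * v) := by rw [← hwq]; ring
        _ = w := by rw [hqv, mul_one]
    rw [e]
    have hw' : w ∈ S.Vz (((1 : ℕ) : ℤ) + k + (S.rX : ℤ)) := hw
    convert hw' using 2
    push_cast
    ring
  · intro H
    have e1 : S.HFz (((S.rX : ℤ) + 1) - (S.rX : ℤ)) = S.HF 1 := by
      rw [add_sub_cancel_left]
      unfold ZeroDimScheme.HFz ZeroDimScheme.HF
      rw [← S.Vz_nat 1]; rfl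
    rw [← e1] at H
    refine ⟨g, hg, ?_, ?_⟩
    · intro i x _ hx
      calc x = x * g * u := by rw [mul_assoc, hgu, mul_one]
        _ = 0 := by rw [hx, zero_mul]
    · intro a ha x hx k h hh
      obtain ⟨b, rfl⟩ : ∃ b, a = b + 1 := ⟨a - 1, by omega⟩
      refine ⟨x * u * h, ?_, ?_⟩
      · rw [S.V_eq_pow, pow_succ, ← S.V_eq_pow] at hx
        induction hx using Submodule.mul_induction_on' with
        | mem_mul_mem y hy z hz =>
          have hz' : z ∈ S.Vz (((S.rX : ℤ) + 1) - (S.rX : ℤ)) := by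
            rw [add_sub_cancel_left, ← Nat.cast_one, S.Vz_nat]
            exact hz
          have h1 := (S.mem_delta τ).1 (S.mem_delta_of_eq τ hg hgu H hz') k h hh
          rw [← S.Vz_nat] at hy
          have h2 := S.Vz_mul hy h1
          have e : y * z * u * h = y * (z * u * h) := by ring
          rw [e, SetLike.mem_coe]
          convert h2 using 2
          push_cast
          ring
        | add y _ z _ hy hz =>
          rw [add_mul, add_mul]
          exact Submodule.add_mem _ hy hz
      · rw [LinearMap.mulRight_apply]
        calc x * u * h * g = x * h * (g * u) := by ring
          _ = x * h := by rw [hgu, mul_one]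
end

section
/- Let K be an infinite field and 𝕏 ⊆ ℙ^n_K a 0-dimensional locally Gorenstein scheme. Then: (a) if r_𝕏 = 1, then 𝕏 is an almost Gorenstein level scheme; (b) if r_𝕏 = 1 and deg(𝕏) > 2, then 𝕏 has minimal Dedekind different; (c) if 𝕏 is level and min{Δ_𝕏, r_𝕏} ≥ 2, then 𝕏 is not an almost Gorenstein scheme. -/
namespace ZeroDimScheme

variable {K : Type} [Field K] {n : ℕ} (S : ZeroDimScheme K n)

theorem aux_mem_V_zero (x : S.Gamma) : x ∈ S.V 0 ↔ ∃ c : K, x = c • (1 : S.Gamma) := by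
  constructor
  · rintro ⟨p, hp, rfl⟩
    have hp' : p.IsHomogeneous 0 := hp
    rw [← MvPolynomial.totalDegree_zero_iff_isHomogeneous,
      MvPolynomial.totalDegree_eq_zero_iff_eq_C] at hp'
    refine ⟨MvPolynomial.coeff 0 p, ?_⟩
    have h2 : S.germ p = S.germ (MvPolynomial.C (MvPolynomial.coeff 0 p)) := by
      rw [← hp']
    have h3 := S.germ.commutes (MvPolynomial.coeff 0 p)
    rw [MvPolynomial.algebraMap_eq] at h3
    change S.germ p = _
    rw [h2, h3, Algebra.algebraMap_eq_smul_one]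
  · rintro ⟨c, rfl⟩
    refine ⟨MvPolynomial.C c, MvPolynomial.isHomogeneous_C _ _, ?_⟩
    have h3 := S.germ.commutes c
    rw [MvPolynomial.algebraMap_eq] at h3
    change S.germ _ = _
    rw [h3, Algebra.algebraMap_eq_smul_one]

theorem aux_V_zero : S.V 0 = Submodule.span K {(1 : S.Gamma)} := by
  ext x
  rw [aux_mem_V_zero, Submodule.mem_span_singleton]
  constructor
  · rintro ⟨c, h⟩; exact ⟨c, h.symm⟩
  · rintro ⟨c, h⟩; exact ⟨c, h.symm⟩

theorem aux_V_succ (i : ℕ) : S.V i ≤ S.V (i + 1) := by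
  rintro _ ⟨p, hp, rfl⟩
  have hp' : p.IsHomogeneous i := hp
  refine ⟨p * MvPolynomial.X 0, hp'.mul (MvPolynomial.isHomogeneous_X K 0), ?_⟩
  change S.germ _ = S.germ _
  rw [map_mul, S.germ_X0, mul_one]

theorem aux_V_mono : Monotone S.V := monotone_nat_of_le_succ S.aux_V_succ

theorem aux_one_mem (i : ℕ) : (1 : S.Gamma) ∈ S.V i :=
  S.aux_V_mono (Nat.zero_le i) ((S.aux_mem_V_zero 1).2 ⟨1, (one_smul _ _).symm⟩)

theorem aux_V_top (i : ℕ) (h : S.rX ≤ i) : S.V i = ⊤ := by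
  have hne : {r : ℕ | ∀ i, r ≤ i → S.HF i = S.degX}.Nonempty := by
    obtain ⟨N, hN⟩ := S.eventually_surj
    refine ⟨N, fun i hi => ?_⟩
    have : S.V i = ⊤ := hN i hi
    unfold HF degX
    rw [this, finrank_top]
  have := Nat.sInf_mem hne i h
  exact Submodule.eq_top_of_finrank_eq this

theorem aux_V_ne_top (i : ℕ) (h : i < S.rX) : S.V i ≠ ⊤ := by
  intro ht
  have : S.rX ≤ i := by
    apply Nat.sInf_le
    intro k hk
    have : S.V k = ⊤ := top_le_iff.1 (ht ▸ S.aux_V_mono hk)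
    unfold HF degX
    rw [this, finrank_top]
  omega

theorem aux_Vz_nat (i : ℕ) : S.Vz (i : ℤ) = S.V i := by
  simp [Vz]

theorem aux_Vz_neg (i : ℤ) (h : i < 0) : S.Vz i = ⊥ := by
  simp [Vz, h]

theorem aux_Vz_top (i : ℤ) (h : (S.rX : ℤ) ≤ i) : S.Vz i = ⊤ := by
  obtain ⟨m, rfl⟩ := Int.eq_ofNat_of_zero_le (by omega : 0 ≤ i)
  rw [aux_Vz_nat]
  exact S.aux_V_top m (by omega)

variable (τ : ∀ j, (S.pt j).carrier →ₗ[K] K)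

theorem aux_nondeg (hτ : S.IsTraceFamily τ) (x : S.Gamma)
    (h : ∀ y, S.Ttot τ (x * y) = 0) : x = 0 := by
  funext j
  apply (hτ j).1
  ext b
  have := h (Pi.single j b)
  simp only [Ttot, LinearMap.sum_apply, LinearMap.comp_apply, LinearMap.proj_apply] at this
  rw [Finset.sum_eq_single j] at this
  · simpa [mul_comm] using this
  · intro k _ hk
    simp [Pi.single_eq_of_ne hk]
  · simp

theorem aux_mem_Cmod (k : ℤ) (g : S.Gamma) : g ∈ S.Cmod τ k ↔
    ∀ i : ℕ, k + (i : ℤ) < 0 → ∀ x ∈ S.V i, S.Ttot τ (g * x) = 0 := by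
  simp [Cmod, Submodule.mem_iInf]

theorem aux_mem_delta (i : ℤ) (f : S.Gamma) : f ∈ S.delta τ i ↔
    ∀ (k : ℤ), ∀ g ∈ S.Cmod τ k, f * g ∈ S.Vz (i + k) := by
  simp [delta, Submodule.mem_iInf]

theorem aux_Cmod_bot (hτ : S.IsTraceFamily τ) (k : ℤ) (hk : k + S.rX < 0) (g : S.Gamma)
    (hg : g ∈ S.Cmod τ k) : g = 0 := by
  apply S.aux_nondeg τ hτ
  intro y
  refine (S.aux_mem_Cmod τ k g).1 hg S.rX hk y ?_
  rw [S.aux_V_top _ le_rfl]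
  trivial

theorem aux_finrank_Cmod (hτ : S.IsTraceFamily τ) (hr : 1 ≤ S.rX) :
    Module.finrank K (S.Cmod τ (-(S.rX : ℤ))) = S.degX - S.HF (S.rX - 1) := by
  let B : LinearMap.BilinForm K S.Gamma := (LinearMap.mul K S.Gamma).compr₂ (S.Ttot τ)
  have hBa : ∀ x y, B x y = S.Ttot τ (x * y) := fun x y => rfl
  have hB : B.Nondegenerate := by
    constructor
    · intro x hx
      exact S.aux_nondeg τ hτ x fun y => hx y
    · intro x hx
      refine S.aux_nondeg τ hτ x fun y => ?_
      rw [mul_comm]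
      exact hx y
  have := LinearMap.BilinForm.finrank_orthogonal hB (S.V (S.rX - 1))
  unfold degX HF
  rw [← this]
  suffices hs : S.Cmod τ (-(S.rX : ℤ)) = B.orthogonal (S.V (S.rX - 1)) by rw [hs]
  ext g
  rw [aux_mem_Cmod, LinearMap.BilinForm.mem_orthogonal_iff]
  constructor
  · intro h x hx
    change B x g = 0
    rw [hBa, mul_comm]
    exact h (S.rX - 1) (by omega) x hx
  · intro h i hi x hx
    have := h x (S.aux_V_mono (by omega : i ≤ S.rX - 1) hx)
    rw [mul_comm]
    exact this

theorem aux_one_ne : (1 : S.Gamma) ≠ 0 := fun h =>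
  one_ne_zero (congrFun h ⟨0, S.spos⟩)

theorem aux_span_le (g : S.Gamma) : Module.finrank K (Submodule.span K {g}) ≤ 1 := by
  simpa using finrank_span_le_card (R := K) ({g} : Set S.Gamma)

theorem aux_deg (hr : 1 ≤ S.rX) : 2 ≤ S.degX := by
  have h1 := Submodule.finrank_lt (S.aux_V_ne_top 0 hr)
  rw [aux_V_zero, finrank_span_singleton S.aux_one_ne] at h1
  exact h1

theorem aux_unit [Infinite K] (hτ : S.IsTraceFamily τ) (hd : 2 ≤ S.degX) :
    ∃ g : S.Gamma, S.Ttot τ g = 0 ∧ IsUnit g := by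
  by_contra! hcon
  let M : Fin S.s → Submodule K S.Gamma := fun j =>
    (Submodule.restrictScalars K (IsLocalRing.maximalIdeal (S.pt j).carrier)).comap
      (LinearMap.proj j)
  have hM : ∀ j (x : S.Gamma), x ∈ M j ↔ x j ∈ IsLocalRing.maximalIdeal (S.pt j).carrier :=
    fun j x => Iff.rfl
  let E := LinearMap.ker (S.Ttot τ)
  have hcov : ⋃ j, (((M j).comap E.subtype : Submodule K E) : Set E) = Set.univ := by
    rw [Set.eq_univ_iff_forall]
    rintro ⟨x, hx⟩
    have := hcon x hx
    rw [Pi.isUnit_iff] at this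
    push Not at this
    obtain ⟨j, hj⟩ := this
    rw [Set.mem_iUnion]
    exact ⟨j, (hM j x).2 ((IsLocalRing.mem_maximalIdeal _).2 hj)⟩
  obtain ⟨j, hj⟩ := Subspace.exists_eq_top_of_iUnion_eq_univ hcov
  have hle : ∀ x, S.Ttot τ x = 0 → x ∈ M j := fun x hx => by
    have : (⟨x, hx⟩ : E) ∈ (M j).comap E.subtype := by rw [hj]; trivial
    exact this
  have h1 : (1 : S.Gamma) ∉ M j := by
    rw [hM]
    intro h
    exact (IsLocalRing.mem_maximalIdeal _).1 h isUnit_one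
  have hT1 : S.Ttot τ 1 ≠ 0 := fun h => h1 (hle 1 h)
  have hge : ∀ x ∈ M j, S.Ttot τ x = 0 := by
    intro x hx
    by_contra hne
    have h2 := hle (x - (S.Ttot τ x / S.Ttot τ 1) • 1) (by
      rw [map_sub, map_smul, smul_eq_mul, div_mul_cancel₀ _ hT1, sub_self])
    have h3 := (M j).sub_mem hx h2
    rw [sub_sub_cancel, Submodule.smul_mem_iff _ (div_ne_zero hne hT1)] at h3
    exact h1 h3
  have hz : ∀ x ∈ M j, x = 0 := by
    intro x hx
    refine S.aux_nondeg τ hτ x fun y => hge _ ?_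
    rw [hM] at hx ⊢
    exact Ideal.mul_mem_right _ _ hx
  have hinj : Function.Injective (S.Ttot τ) := by
    rw [← LinearMap.ker_eq_bot, LinearMap.ker_eq_bot']
    exact fun x hx => hz x (hle x hx)
  have := LinearMap.finrank_le_finrank_of_injective hinj
  rw [Module.finrank_self] at this
  unfold degX at hd
  omega

end ZeroDimScheme

/-- Proposition 6.11.  Let `K` be an infinite field and
`𝕏 ⊆ ℙⁿ_K` a 0-dimensional locally Gorenstein scheme (with trace family `τ`).  Then:
(a) if `r_𝕏 = 1` then `𝕏` is an almost Gorenstein level scheme;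
(b) if `r_𝕏 = 1` and `deg 𝕏 > 2` then `𝕏` has minimal Dedekind different;
(c) if `𝕏` is level and `min {Δ_𝕏, r_𝕏} ≥ 2`, then `𝕏` is not an almost
Gorenstein scheme. -/
theorem dedekind_CB_stmt18 (K : Type) [Field K] [Infinite K] (n : ℕ)
    (S : ZeroDimScheme K n)
    (τ : ∀ j, (S.pt j).carrier →ₗ[K] K) (hτ : S.IsTraceFamily τ) :
    (S.rX = 1 → S.AlmostGorenstein τ ∧ S.Level) ∧
    (S.rX = 1 → 2 < S.degX → S.MinimalDedekind τ) ∧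
    (S.Level → 2 ≤ min (S.degX - S.HF (S.rX - 1)) S.rX →
      ¬ S.AlmostGorenstein τ) := by
  refine ⟨fun hr => ?_, fun hr hd => ?_, fun hL hmin hAG => ?_⟩
  · have hd := S.aux_deg (by omega)
    obtain ⟨g, hg0, hgu⟩ := S.aux_unit τ hτ hd
    refine ⟨⟨g, ?_, ?_, ?_⟩, ?_⟩
    · rw [S.aux_mem_Cmod]
      intro i hi x hx
      have : i = 0 := by omega
      subst this
      obtain ⟨c, rfl⟩ := (S.aux_mem_V_zero x).1 hx
      rw [mul_smul_comm, mul_one, map_smul, hg0, smul_zero]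
    · intro i x _ h
      exact (hgu.mul_left_eq_zero).1 h
    · intro a ha x hx k h hh
      by_cases hk : k + S.rX < 0
      · rw [S.aux_Cmod_bot τ hτ k hk h hh, mul_zero]
        exact Submodule.zero_mem _
      · rw [S.aux_Vz_top _ (by omega)]
        obtain ⟨u, rfl⟩ := hgu
        refine ⟨x * h * ↑u⁻¹, trivial, ?_⟩
        simp
    · intro i hi x hx h
      have : i = 0 := by omega
      subst this
      obtain ⟨c, rfl⟩ := (S.aux_mem_V_zero x).1 hx
      by_cases hc : c = 0
      · rw [hc, zero_smul]
        exact Submodule.zero_mem _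
      exfalso
      apply S.aux_V_ne_top 0 hi
      rw [eq_top_iff]
      intro y _
      have h1 := h 1 le_rfl y (by rw [S.aux_V_top 1 (by omega)]; trivial)
      rw [show ((0 : ℕ) : ℤ) + ((1 : ℕ) : ℤ) - 1 = ((0 : ℕ) : ℤ) by norm_num, S.aux_Vz_nat,
        smul_mul_assoc, one_mul, Submodule.smul_mem_iff _ hc] at h1
      exact h1
  · obtain ⟨g, hg0, hgu⟩ := S.aux_unit τ hτ hd.le
    have hC : ∀ g, S.Ttot τ g = 0 → g ∈ S.Cmod τ (-1) := by
      intro g hg0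
      rw [S.aux_mem_Cmod]
      intro i hi x hx
      have : i = 0 := by omega
      subst this
      obtain ⟨c, rfl⟩ := (S.aux_mem_V_zero x).1 hx
      rw [mul_smul_comm, mul_one, map_smul, hg0, smul_zero]
    intro i
    split_ifs with hi
    · rw [eq_top_iff]
      intro f _
      rw [S.aux_mem_delta]
      intro k h hh
      by_cases hk : k + S.rX < 0
      · rw [S.aux_Cmod_bot τ hτ k hk h hh, mul_zero]
        exact Submodule.zero_mem _
      · rw [S.aux_Vz_top _ (by omega)]
        trivial
    · rw [eq_bot_iff]
      intro f hf
      rw [S.aux_mem_delta] at hf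
      rw [Submodule.mem_bot]
      have hfg := hf (-1) g (hC g hg0)
      by_cases hi1 : i = 1
      · subst hi1
        rw [show (1 : ℤ) + -1 = ((0 : ℕ) : ℤ) by norm_num, S.aux_Vz_nat] at hfg
        obtain ⟨c, hc⟩ := (S.aux_mem_V_zero _).1 hfg
        by_contra hf0
        have hc0 : c ≠ 0 := by
          rintro rfl
          rw [zero_smul] at hc
          exact hf0 ((hgu.mul_left_eq_zero).1 hc)
        have hsub : LinearMap.ker (S.Ttot τ) ≤ Submodule.span K {g} := by
          intro h hh
          have h1 := hf (-1) h (hC h hh)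
          rw [show (1 : ℤ) + -1 = ((0 : ℕ) : ℤ) by norm_num, S.aux_Vz_nat] at h1
          obtain ⟨d, hd'⟩ := (S.aux_mem_V_zero _).1 h1
          rw [Submodule.mem_span_singleton]
          refine ⟨c⁻¹ * d, ?_⟩
          have e1 : c • h = d • g := by
            calc c • h = (c • 1) * h := by rw [smul_mul_assoc, one_mul]
              _ = (f * h) * g := by rw [← hc]; ring
              _ = d • g := by rw [hd', smul_mul_assoc, one_mul]
          rw [mul_smul, ← e1, inv_smul_smul₀ hc0]
        have h1 := Submodule.finrank_mono hsub
        have h2 := S.aux_span_le g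
        have h3 := LinearMap.finrank_range_add_finrank_ker (S.Ttot τ)
        have h4 := Submodule.finrank_le (LinearMap.range (S.Ttot τ))
        rw [Module.finrank_self] at h4
        unfold ZeroDimScheme.degX at hd
        omega
      · rw [S.aux_Vz_neg _ (by omega), Submodule.mem_bot] at hfg
        exact (hgu.mul_left_eq_zero).1 hfg
  · obtain ⟨g, hg, hann, hAG⟩ := hAG
    obtain ⟨hD, hr⟩ := le_min_iff.1 hmin
    rw [← S.aux_finrank_Cmod τ hτ (by omega)] at hD
    have hann' : ∀ x, x * g = 0 → x = 0 := fun x =>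
      hann S.rX x (by rw [S.aux_V_top _ le_rfl]; trivial)
    have hsub : S.Cmod τ (-(S.rX : ℤ)) ≤ Submodule.span K {g} := by
      intro h hh
      have key : ∀ a : ℕ, 1 ≤ a → ∀ y ∈ S.V a, ∃ z ∈ S.V a, z * g = y * h := by
        intro a ha y hy
        have := hAG a ha y hy _ h hh
        rw [neg_add_cancel_right, S.aux_Vz_nat] at this
        obtain ⟨z, hz, hzz⟩ := this
        exact ⟨z, hz, hzz⟩
      obtain ⟨x, hx, hxg⟩ := key 1 le_rfl 1 (S.aux_one_mem 1)
      rw [one_mul] at hxg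
      have hx0 := hL 1 (by omega) x hx (by
        intro a ha y hy
        obtain ⟨z, hz, hzg⟩ := key a ha y hy
        have : x * y = z := by
          rw [← sub_eq_zero]
          apply hann'
          rw [sub_mul, hzg, ← hxg]
          ring
        rw [this, show ((1 : ℕ) : ℤ) + (a : ℤ) - 1 = (a : ℤ) by push_cast; ring, S.aux_Vz_nat]
        exact hz)
      rw [show ((1 : ℕ) : ℤ) - 1 = ((0 : ℕ) : ℤ) by norm_num, S.aux_Vz_nat] at hx0
      obtain ⟨c, rfl⟩ := (S.aux_mem_V_zero x).1 hx0
      rw [Submodule.mem_span_singleton]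
      exact ⟨c, by rw [← hxg, smul_mul_assoc, one_mul]⟩
    have h1 := Submodule.finrank_mono hsub
    have h2 := S.aux_span_le g
    omega
end
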